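/- Let S and A be nonempty finite sets, T ≥ 1, γ ∈ [0,1), λ ≥ 0, P a transition kernel on S×A, ρ a probability distribution on S, and r : S×A → [0,1]. For θ ∈ ℝ^{S×A}, let Ḡ(θ) = Σ_{z∈(S×A)^T} ν(θ;z)·u_θ(z) be the expectation of the entropy-regularized single-trajectory REINFORCE vector under the truncated-trajectory distribution. Then Ḡ is Lipschitz continuous: for all θ, θ' ∈ ℝ^{S×A}, ‖Ḡ(θ) − Ḡ(θ')‖₂ ≤ ( (8 + λ·(4 + 8·log|A|)) / (1−γ)³ )·‖θ − θ'‖₂. -/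

import Mathlib

open scoped BigOperators

/-- The softmax policy `π_θ(a|s) = exp θ(s,a) / Σ_{a'} exp θ(s,a')`. -/
noncomputable def softmax {S A : Type*} [Fintype A] (θ : S × A → ℝ) (s : S) (a : A) : ℝ :=
  Real.exp (θ (s, a)) / ∑ a' : A, Real.exp (θ (s, a'))

/-- The score vector `∇ log π_θ(a|s) ∈ ℝ^{S×A}`. -/
noncomputable def score {S A : Type*} [Fintype A] [DecidableEq S] [DecidableEq A]
    (θ : S × A → ℝ) (s : S) (a : A) : S × A → ℝ :=
  fun p => if p.1 = s then (if p.2 = a then (1 : ℝ) else 0) - softmax θ p.1 p.2 else 0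

/-- The truncated-trajectory distribution
`ν(θ; z) = ρ(s⁰) π_θ(a⁰|s⁰) ∏_{t=1}^{T-1} P(s^t|s^{t-1},a^{t-1}) π_θ(a^t|s^t)`. -/
noncomputable def trajDist {S A : Type*} [Fintype A] {T : ℕ}
    (P : S → A → S → ℝ) (ρ : S → ℝ) (θ : S × A → ℝ) (z : Fin T → S × A) : ℝ :=
  ∏ t : Fin T,
    (if (t : ℕ) = 0 then ρ (z t).1
      else
        P (z ⟨(t : ℕ) - 1, lt_of_le_of_lt (Nat.sub_le _ _) t.isLt⟩).1
          (z ⟨(t : ℕ) - 1, lt_of_le_of_lt (Nat.sub_le _ _) t.isLt⟩).2 (z t).1) *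
      softmax θ (z t).1 (z t).2

/-- The single-trajectory (entropy-regularized) REINFORCE vector
`u_θ(z) = Σ_{t<T} γ^t (Σ_{ℓ≤t} ∇log π_θ(a^ℓ|s^ℓ)) (r(s^t,a^t) - λ log π_θ(a^t|s^t))`. -/
noncomputable def reinforce {S A : Type*} [Fintype S] [Fintype A] [DecidableEq S]
    [DecidableEq A] {T : ℕ} (γ lam : ℝ) (r : S → A → ℝ) (θ : S × A → ℝ)
    (z : Fin T → S × A) : S × A → ℝ :=
  ∑ t : Fin T,
    (γ ^ (t : ℕ) * (r (z t).1 (z t).2 - lam * Real.log (softmax θ (z t).1 (z t).2))) •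
      ∑ l : Fin T, if (l : ℕ) ≤ (t : ℕ) then score θ (z l).1 (z l).2 else 0

/-- The batch REINFORCE estimator `ĝ_θ(z) = (1/B) Σ_b u_θ(z_b)`. -/
noncomputable def batchEstimator {S A : Type*} [Fintype S] [Fintype A] [DecidableEq S]
    [DecidableEq A] {T B : ℕ} (γ lam : ℝ) (r : S → A → ℝ) (θ : S × A → ℝ)
    (z : Fin B → Fin T → S × A) : S × A → ℝ :=
  (1 / (B : ℝ)) • ∑ b, reinforce γ lam r θ (z b)

/-- The Euclidean norm on `ι → ℝ`. -/
noncomputable def eucNorm {ι : Type*} [Fintype ι] (u : ι → ℝ) : ℝ :=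
  Real.sqrt (∑ i, u i ^ 2)

/-!
Along a differentiable curve of parameters with velocity `v`, the log-probability of a trajectory
`z` has derivative `⟨G, v⟩`, where `G` is the sum of the scores along `z`, and each score `∇ log π`
at `s` has derivative `-F v`, where `F` is the Fisher information matrix of the policy at `s`.
Scores have norm at most `√2`, so `‖F v‖ ≤ 2 ‖v‖`.

The terms of the REINFORCE vector up to time `n` only depend on the first `n + 1` steps, so the
expectation splits as `∑ n, γ ^ n • E[c G]` with `c` the regularized reward at time `n`. The
derivative of `E[c G]` is the expectation of `c (⟨G, v⟩ G - ∑ F v) - λ ⟨∇ log π, v⟩ G`, of norm at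
most `(2 (n + 1)² + 2 (n + 1)) E|c| ‖v‖ + 2 (n + 1) |λ| ‖v‖`, hence at most
`(4 E|c| + 2 |λ|) (n + 2).choose 2 ‖v‖`. The log-policy is unbounded, but for rewards bounded by
`R` we have `E|c| ≤ R + |λ| log |A|`, because the entropy of a distribution on `A` is at most
`log |A|`. It remains to use `∑ n, (n + 2).choose 2 * γ ^ n = 1 / (1 - γ) ^ 3`.
-/

open Finset

section EuclideanNorm

variable {ι κ : Type*} [Fintype ι]

lemma eucNorm_eq_norm_toLp (u : ι → ℝ) : eucNorm u = ‖WithLp.toLp 2 u‖ := by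
  simp only [eucNorm, EuclideanSpace.norm_eq, Real.norm_eq_abs, sq_abs]

lemma eucNorm_nonneg (u : ι → ℝ) : 0 ≤ eucNorm u :=
  Real.sqrt_nonneg _

lemma eucNorm_add_le (u v : ι → ℝ) : eucNorm (u + v) ≤ eucNorm u + eucNorm v := by
  simpa only [eucNorm_eq_norm_toLp, WithLp.toLp_add] using norm_add_le _ _

lemma eucNorm_sub_le (u v : ι → ℝ) : eucNorm (u - v) ≤ eucNorm u + eucNorm v := by
  simpa only [eucNorm_eq_norm_toLp, WithLp.toLp_sub] using norm_sub_le _ _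

lemma eucNorm_smul (c : ℝ) (u : ι → ℝ) : eucNorm (c • u) = |c| * eucNorm u := by
  rw [eucNorm_eq_norm_toLp, eucNorm_eq_norm_toLp, WithLp.toLp_smul, norm_smul, Real.norm_eq_abs]

lemma eucNorm_sum_le (s : Finset κ) (f : κ → ι → ℝ) :
    eucNorm (∑ k ∈ s, f k) ≤ ∑ k ∈ s, eucNorm (f k) := by
  simpa only [eucNorm_eq_norm_toLp, WithLp.toLp_sum] using norm_sum_le _ _

lemma abs_dotProduct_le_eucNorm_mul_eucNorm (u v : ι → ℝ) :
    |u ⬝ᵥ v| ≤ eucNorm u * eucNorm v := by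
  have h := abs_real_inner_le_norm (WithLp.toLp 2 v) (WithLp.toLp 2 u)
  rwa [EuclideanSpace.inner_toLp_toLp, star_trivial, mul_comm, ← eucNorm_eq_norm_toLp,
    ← eucNorm_eq_norm_toLp] at h

lemma eucNorm_sub_le_of_hasDerivAt {f f' : ℝ → ι → ℝ} {C : ℝ}
    (hf : ∀ x, HasDerivAt f (f' x) x) (hC : ∀ x, eucNorm (f' x) ≤ C) :
    eucNorm (f 1 - f 0) ≤ C := by
  simp only [eucNorm_eq_norm_toLp] at hC
  rw [eucNorm_eq_norm_toLp, WithLp.toLp_sub]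
  exact norm_image_sub_le_of_norm_deriv_le_segment_01'
    (fun x _ => ((PiLp.hasFDerivAt_toLp 2 (f x)).comp_hasDerivAt x (hf x)).hasDerivWithinAt)
    fun x _ => hC x

end EuclideanNorm

section StdSimplex

variable {ι : Type*} [Fintype ι] {p : ι → ℝ}

lemma sum_mul_le_of_mem_stdSimplex (hp : p ∈ stdSimplex ℝ ι) {f : ι → ℝ} {C : ℝ}
    (hf : ∀ i, f i ≤ C) : ∑ i, p i * f i ≤ C :=
  calc ∑ i, p i * f i ≤ ∑ i, p i * C :=
        sum_le_sum fun i _ => mul_le_mul_of_nonneg_left (hf i) (hp.1 i)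
    _ = C := by rw [← sum_mul, hp.2, one_mul]

lemma sum_negMulLog_le_log_card (hp : p ∈ stdSimplex ℝ ι) :
    ∑ i, Real.negMulLog (p i) ≤ Real.log (Fintype.card ι) := by
  have : Nonempty ι := by
    by_contra! h
    simpa using hp.2
  have hcard : (0 : ℝ) < Fintype.card ι := by exact_mod_cast Fintype.card_pos
  have jensen := Real.concaveOn_negMulLog.le_map_sum (t := univ) (p := p)
    (w := fun _ => (Fintype.card ι : ℝ)⁻¹) (fun _ _ => by positivity)
    (by simp [hcard.ne']) (fun i _ => hp.1 i)
  simp only [smul_eq_mul, ← mul_sum, hp.2, mul_one, Real.negMulLog, Real.log_inv] at jensen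
  rw [neg_mul_neg] at jensen
  exact le_of_mul_le_mul_left jensen (by positivity)

end StdSimplex

lemma sum_range_choose_mul_pow_le {γ : ℝ} (hγ0 : 0 ≤ γ) (hγ1 : γ < 1) (k T : ℕ) :
    ∑ n ∈ range T, ((n + k).choose k : ℝ) * γ ^ n ≤ 1 / (1 - γ) ^ (k + 1) :=
  sum_le_hasSum _ (fun _ _ => by positivity)
    (hasSum_choose_mul_geometric_of_norm_lt_one k (by rwa [Real.norm_of_nonneg hγ0]))

lemma sum_init_last {X M : Type*} [Fintype X] [AddCommMonoid M] {n : ℕ}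
    (f : (Fin n → X) → X → M) :
    ∑ z : Fin (n + 1) → X, f (Fin.init z) (z (Fin.last n)) = ∑ z, ∑ y, f z y := by
  rw [sum_comm, ← Fintype.sum_prod_type',
    ← (Fin.snocEquiv fun _ : Fin (n + 1) => X).symm.sum_comp]
  rfl

section Policy

variable {S A : Type*} [Fintype A] [Nonempty A]

lemma sum_exp_pos (θ : S × A → ℝ) (s : S) : 0 < ∑ a, Real.exp (θ (s, a)) :=
  sum_pos (fun _ _ => Real.exp_pos _) univ_nonempty

lemma softmax_pos (θ : S × A → ℝ) (s : S) (a : A) : 0 < softmax θ s a :=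
  div_pos (Real.exp_pos _) (sum_exp_pos θ s)

lemma softmax_mem_stdSimplex (θ : S × A → ℝ) (s : S) : softmax θ s ∈ stdSimplex ℝ A :=
  ⟨fun a => (softmax_pos θ s a).le, by
    simp only [softmax, ← sum_div, div_self (sum_exp_pos θ s).ne']⟩

lemma softmax_le_one (θ : S × A → ℝ) (s : S) (a : A) : softmax θ s a ≤ 1 :=
  (mem_Icc_of_mem_stdSimplex (softmax_mem_stdSimplex θ s) a).2

/-- The reward `r(s, a) - λ log π_θ(a | s)` of the entropy-regularized problem at `y = (s, a)`. -/
noncomputable def regReward (lam : ℝ) (r : S → A → ℝ) (θ : S × A → ℝ) (y : S × A) : ℝ :=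
  r y.1 y.2 - lam * Real.log (softmax θ y.1 y.2)

lemma sum_softmax_mul_abs_regReward_le {lam R : ℝ} {r : S → A → ℝ} (hr : ∀ s a, |r s a| ≤ R)
    (θ : S × A → ℝ) (s : S) :
    ∑ a, softmax θ s a * |regReward lam r θ (s, a)| ≤ R + |lam| * Real.log (Fintype.card A) := by
  have hc (a : A) : softmax θ s a * |regReward lam r θ (s, a)| ≤
      softmax θ s a * |r s a| + |lam| * Real.negMulLog (softmax θ s a) := by
    have hlog := Real.log_nonpos (softmax_pos θ s a).le (softmax_le_one θ s a)
    calc softmax θ s a * |regReward lam r θ (s, a)|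
        ≤ softmax θ s a * (|r s a| + |lam * Real.log (softmax θ s a)|) :=
          mul_le_mul_of_nonneg_left (abs_sub _ _) (softmax_pos θ s a).le
      _ = softmax θ s a * |r s a| + |lam| * Real.negMulLog (softmax θ s a) := by
          rw [abs_mul, abs_of_nonpos hlog, Real.negMulLog]
          ring
  calc ∑ a, softmax θ s a * |regReward lam r θ (s, a)|
      ≤ ∑ a, softmax θ s a * |r s a| + |lam| * ∑ a, Real.negMulLog (softmax θ s a) := by
        rw [mul_sum, ← sum_add_distrib]
        exact sum_le_sum fun a _ => hc a
    _ ≤ R + |lam| * Real.log (Fintype.card A) := by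
        gcongr
        · exact sum_mul_le_of_mem_stdSimplex (softmax_mem_stdSimplex θ s) (hr s)
        · exact sum_negMulLog_le_log_card (softmax_mem_stdSimplex θ s)

variable [Fintype S] [DecidableEq S] [DecidableEq A]

omit [Nonempty A] in
lemma score_dotProduct (θ v : S × A → ℝ) (s : S) (a : A) :
    score θ s a ⬝ᵥ v = v (s, a) - ∑ b, softmax θ s b * v (s, b) := by
  simp [dotProduct, score, Fintype.sum_prod_type, sum_ite_irrel, ite_mul, sub_mul]

lemma eucNorm_score_le (θ : S × A → ℝ) (s : S) (a : A) : eucNorm (score θ s a) ≤ √2 := by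
  refine Real.sqrt_le_sqrt ?_
  calc ∑ i, score θ s a i ^ 2 = ∑ b, ((if b = a then 1 else 0) - softmax θ s b) ^ 2 := by
        simp [score, Fintype.sum_prod_type, sum_ite_irrel, ite_pow]
    _ ≤ ∑ b, ((if b = a then 1 else 0) + softmax θ s b) := by
        refine sum_le_sum fun b _ => ?_
        have h0 := softmax_pos θ s b
        have h1 := softmax_le_one θ s b
        split_ifs <;> nlinarith
    _ = 2 := by
        rw [sum_add_distrib, (softmax_mem_stdSimplex θ s).2, sum_ite_eq' univ a,
          if_pos (mem_univ a), one_add_one_eq_two]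

lemma abs_score_dotProduct_le (θ v : S × A → ℝ) (s : S) (a : A) :
    |score θ s a ⬝ᵥ v| ≤ √2 * eucNorm v :=
  (abs_dotProduct_le_eucNorm_mul_eucNorm _ _).trans
    (mul_le_mul_of_nonneg_right (eucNorm_score_le θ s a) (eucNorm_nonneg v))

/-- The product `F v` of the Fisher information matrix `F = ∑ a, π_θ(a | s) • g_a g_aᵀ`,
`g_a = ∇ log π_θ(a | s)`, of the policy at `s` with the vector `v`. -/
noncomputable def fisherMulVec (θ : S × A → ℝ) (s : S) (v : S × A → ℝ) : S × A → ℝ :=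
  ∑ a, (softmax θ s a * (score θ s a ⬝ᵥ v)) • score θ s a

lemma eucNorm_fisherMulVec_le (θ : S × A → ℝ) (s : S) (v : S × A → ℝ) :
    eucNorm (fisherMulVec θ s v) ≤ 2 * eucNorm v := by
  have hterm (a : A) : |score θ s a ⬝ᵥ v| * eucNorm (score θ s a) ≤ 2 * eucNorm v :=
    calc |score θ s a ⬝ᵥ v| * eucNorm (score θ s a) ≤ (√2 * eucNorm v) * √2 :=
          mul_le_mul (abs_score_dotProduct_le θ v s a) (eucNorm_score_le θ s a)
            (eucNorm_nonneg _) (mul_nonneg (Real.sqrt_nonneg 2) (eucNorm_nonneg v))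
      _ = 2 * eucNorm v := by rw [mul_right_comm, Real.mul_self_sqrt zero_le_two]
  refine (eucNorm_sum_le _ _).trans ?_
  simp only [eucNorm_smul, abs_mul, abs_of_pos (softmax_pos θ s _), mul_assoc]
  exact sum_mul_le_of_mem_stdSimplex (softmax_mem_stdSimplex θ s) hterm

lemma sum_softmax_mul_score_dotProduct (θ v : S × A → ℝ) (s : S) :
    ∑ a, softmax θ s a * (score θ s a ⬝ᵥ v) = 0 := by
  simp only [score_dotProduct, mul_sub, sum_sub_distrib]
  rw [← sum_mul, (softmax_mem_stdSimplex θ s).2, one_mul, sub_self]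

lemma fisherMulVec_apply (θ : S × A → ℝ) (s : S) (v : S × A → ℝ) (i : S × A) :
    fisherMulVec θ s v i =
      if i.1 = s then softmax θ i.1 i.2 * (score θ i.1 i.2 ⬝ᵥ v) else 0 := by
  obtain ⟨t, b⟩ := i
  simp only [fisherMulVec, Finset.sum_apply, Pi.smul_apply, smul_eq_mul, score]
  split_ifs with h
  · subst h
    simp [mul_sub, sum_sub_distrib, ← sum_mul, sum_softmax_mul_score_dotProduct]
  · simp only [mul_zero, sum_const_zero]

variable {θ : ℝ → S × A → ℝ} {v : S × A → ℝ} {x : ℝ}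

lemma hasDerivAt_softmax (hθ : HasDerivAt θ v x) (s : S) (a : A) :
    HasDerivAt (fun t => softmax (θ t) s a)
      (softmax (θ x) s a * (score (θ x) s a ⬝ᵥ v)) x := by
  have hexp (b : A) : HasDerivAt (fun t => Real.exp (θ t (s, b)))
      (Real.exp (θ x (s, b)) * v (s, b)) x := (hasDerivAt_pi.1 hθ (s, b)).exp
  have hsum := HasDerivAt.fun_sum fun b (_ : b ∈ univ) => hexp b
  have hpos := sum_exp_pos (θ x) s
  refine ((hexp a).fun_div hsum hpos.ne').congr_deriv ?_
  simp only [score_dotProduct, softmax, div_mul_eq_mul_div, ← sum_div]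
  field_simp

lemma hasDerivAt_log_softmax (hθ : HasDerivAt θ v x) (s : S) (a : A) :
    HasDerivAt (fun t => Real.log (softmax (θ t) s a)) (score (θ x) s a ⬝ᵥ v) x := by
  have hpos := softmax_pos (θ x) s a
  refine ((hasDerivAt_softmax hθ s a).log hpos.ne').congr_deriv ?_
  rw [mul_div_cancel_left₀ _ hpos.ne']

lemma hasDerivAt_regReward (hθ : HasDerivAt θ v x) (lam : ℝ) (r : S → A → ℝ) (y : S × A) :
    HasDerivAt (fun t => regReward lam r (θ t) y) (-(lam * (score (θ x) y.1 y.2 ⬝ᵥ v))) x :=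
  ((hasDerivAt_log_softmax hθ y.1 y.2).const_mul lam).const_sub _

lemma hasDerivAt_score (hθ : HasDerivAt θ v x) (s : S) (a : A) :
    HasDerivAt (fun t => score (θ t) s a) (-fisherMulVec (θ x) s v) x := by
  refine hasDerivAt_pi.2 fun i => ?_
  simp only [score, Pi.neg_apply, fisherMulVec_apply]
  by_cases h : i.1 = s
  · simpa only [if_pos h] using (hasDerivAt_softmax hθ i.1 i.2).const_sub _
  · simpa only [if_neg h, neg_zero] using hasDerivAt_const x (0 : ℝ)

end Policy

section Trajectory

variable {S A : Type*} {P : S → A → S → ℝ} {ρ : S → ℝ}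

/-- The conditional distribution of the state following the trajectory `z`, which is the initial
distribution `ρ` when `z` is empty. -/
def nextStateDist (P : S → A → S → ℝ) (ρ : S → ℝ) : {n : ℕ} → (Fin n → S × A) → S → ℝ
  | 0, _ => ρ
  | n + 1, z => P (z (Fin.last n)).1 (z (Fin.last n)).2

lemma nextStateDist_mem_stdSimplex [Fintype S] (hP : ∀ s a, P s a ∈ stdSimplex ℝ S)
    (hρ : ρ ∈ stdSimplex ℝ S) {n : ℕ} (z : Fin n → S × A) :
    nextStateDist P ρ z ∈ stdSimplex ℝ S := by
  cases n with
  | zero => exact hρ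
  | succ n => exact hP _ _

variable [Fintype A]

lemma trajDist_eq_init_mul (P : S → A → S → ℝ) (ρ : S → ℝ) (θ : S × A → ℝ) {n : ℕ}
    (z : Fin (n + 1) → S × A) :
    trajDist P ρ θ z = trajDist P ρ θ (Fin.init z) *
      (nextStateDist P ρ (Fin.init z) (z (Fin.last n)).1 *
        softmax θ (z (Fin.last n)).1 (z (Fin.last n)).2) := by
  rw [trajDist, Fin.prod_univ_castSucc]
  congr 2
  cases n <;> rfl

variable [Nonempty A] [Fintype S]

section Expectation

variable (hP : ∀ s a, P s a ∈ stdSimplex ℝ S) (hρ : ρ ∈ stdSimplex ℝ S) (θ : S × A → ℝ) {n : ℕ}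
include hP hρ

lemma sum_trajDist_smul_init {E : Type*} [AddCommGroup E] [Module ℝ E]
    (f : (Fin n → S × A) → E) :
    ∑ z : Fin (n + 1) → S × A, trajDist P ρ θ z • f (Fin.init z) =
      ∑ z, trajDist P ρ θ z • f z := by
  simp only [trajDist_eq_init_mul]
  rw [sum_init_last fun z y =>
    (trajDist P ρ θ z * (nextStateDist P ρ z y.1 * softmax θ y.1 y.2)) • f z]
  refine sum_congr rfl fun z _ => ?_
  rw [← sum_smul, ← mul_sum, Fintype.sum_prod_type]
  simp only [← mul_sum, (softmax_mem_stdSimplex θ _).2, mul_one,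
    (nextStateDist_mem_stdSimplex hP hρ z).2]

lemma trajDist_mem_stdSimplex :
    (trajDist P ρ θ : (Fin n → S × A) → ℝ) ∈ stdSimplex ℝ (Fin n → S × A) := by
  induction n with
  | zero => simp [stdSimplex, trajDist]
  | succ n ih =>
    refine ⟨fun z => ?_, ?_⟩
    · rw [trajDist_eq_init_mul]
      exact mul_nonneg (ih.1 _)
        (mul_nonneg ((nextStateDist_mem_stdSimplex hP hρ _).1 _) (softmax_pos _ _ _).le)
    · simpa [ih.2] using sum_trajDist_smul_init hP hρ θ fun _ : Fin n → S × A => (1 : ℝ)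

lemma sum_trajDist_mul_last_le {g : S × A → ℝ} {C : ℝ}
    (hg : ∀ s, ∑ a, softmax θ s a * g (s, a) ≤ C) :
    ∑ z : Fin (n + 1) → S × A, trajDist P ρ θ z * g (z (Fin.last n)) ≤ C := by
  simp only [trajDist_eq_init_mul]
  rw [sum_init_last fun z y =>
    trajDist P ρ θ z * (nextStateDist P ρ z y.1 * softmax θ y.1 y.2) * g y]
  simp only [Fintype.sum_prod_type, mul_assoc, ← mul_sum]
  exact sum_mul_le_of_mem_stdSimplex (trajDist_mem_stdSimplex hP hρ θ) fun z =>
    sum_mul_le_of_mem_stdSimplex (nextStateDist_mem_stdSimplex hP hρ z) hg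

end Expectation

variable [DecidableEq S] [DecidableEq A]

/-- The score `∇ log ν(θ; z)` of the trajectory `z`; the transition probabilities do not depend
on `θ`, so it is the sum of the scores of the actions taken. -/
noncomputable def trajScore (θ : S × A → ℝ) {n : ℕ} (z : Fin n → S × A) : S × A → ℝ :=
  ∑ l, score θ (z l).1 (z l).2

lemma eucNorm_trajScore_le (θ : S × A → ℝ) {n : ℕ} (z : Fin n → S × A) :
    eucNorm (trajScore θ z) ≤ n * √2 := by
  refine (eucNorm_sum_le _ _).trans ((sum_le_card_nsmul _ _ _ fun l _ =>
    eucNorm_score_le θ (z l).1 (z l).2).trans_eq ?_)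
  rw [card_univ, Fintype.card_fin, nsmul_eq_mul]

lemma eucNorm_sum_fisherMulVec_le (θ v : S × A → ℝ) {n : ℕ} (z : Fin n → S × A) :
    eucNorm (∑ l, fisherMulVec θ (z l).1 v) ≤ n * (2 * eucNorm v) := by
  refine (eucNorm_sum_le _ _).trans ((sum_le_card_nsmul _ _ _ fun l _ =>
    eucNorm_fisherMulVec_le θ (z l).1 v).trans_eq ?_)
  rw [card_univ, Fintype.card_fin, nsmul_eq_mul]

section Derivative

variable {θ : ℝ → S × A → ℝ} {v : S × A → ℝ} {x : ℝ} (hθ : HasDerivAt θ v x) {n : ℕ}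
  (z : Fin n → S × A)
include hθ

lemma hasDerivAt_trajDist :
    HasDerivAt (fun t => trajDist P ρ (θ t) z)
      (trajDist P ρ (θ x) z * (trajScore (θ x) z ⬝ᵥ v)) x := by
  refine (HasDerivAt.fun_finsetProd fun t _ =>
    (hasDerivAt_softmax hθ (z t).1 (z t).2).const_mul _).congr_deriv ?_
  rw [trajScore, sum_dotProduct, mul_sum]
  refine sum_congr rfl fun t _ => ?_
  rw [trajDist, ← prod_erase_mul univ _ (mem_univ t), smul_eq_mul]
  ring

lemma hasDerivAt_trajScore :
    HasDerivAt (fun t => trajScore (θ t) z) (-∑ l, fisherMulVec (θ x) (z l).1 v) x := by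
  rw [← sum_neg_distrib]
  exact HasDerivAt.fun_sum fun l _ => hasDerivAt_score hθ (z l).1 (z l).2

end Derivative

end Trajectory

section Stage

variable {S A : Type*} [Fintype S] [Fintype A] [DecidableEq S] [DecidableEq A] {n : ℕ}

/-- The undiscounted time-`n` term of the REINFORCE vector, as a function of the first `n + 1`
steps of the trajectory. -/
noncomputable def stageTerm (lam : ℝ) (r : S → A → ℝ) (θ : S × A → ℝ) (z : Fin (n + 1) → S × A) :
    S × A → ℝ :=
  regReward lam r θ (z (Fin.last n)) • trajScore θ z

lemma reinforce_eq_init_add (γ lam : ℝ) (r : S → A → ℝ) (θ : S × A → ℝ)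
    (z : Fin (n + 1) → S × A) :
    reinforce γ lam r θ z =
      reinforce γ lam r θ (Fin.init z) + γ ^ n • stageTerm lam r θ z := by
  rw [reinforce, Fin.sum_univ_castSucc]
  congr 1
  · refine sum_congr rfl fun t _ => ?_
    rw [Fin.sum_univ_castSucc, if_neg (by simp), add_zero]
    rfl
  · simp only [Fin.val_last, Fin.is_le, if_true, mul_smul]
    rfl

variable [Nonempty A] {P : S → A → S → ℝ} {ρ : S → ℝ}

/-- The expectation of the undiscounted time-`n` term of the REINFORCE vector. -/
noncomputable def stageMean (P : S → A → S → ℝ) (ρ : S → ℝ) (lam : ℝ) (r : S → A → ℝ) (n : ℕ)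
    (θ : S × A → ℝ) : S × A → ℝ :=
  ∑ z : Fin (n + 1) → S × A, trajDist P ρ θ z • stageTerm lam r θ z

lemma sum_trajDist_smul_reinforce (hP : ∀ s a, P s a ∈ stdSimplex ℝ S)
    (hρ : ρ ∈ stdSimplex ℝ S) (γ lam : ℝ) (r : S → A → ℝ) (θ : S × A → ℝ) (T : ℕ) :
    ∑ z : Fin T → S × A, trajDist P ρ θ z • reinforce γ lam r θ z =
      ∑ n ∈ range T, γ ^ n • stageMean P ρ lam r n θ := by
  induction T with
  | zero => simp [reinforce]
  | succ T ih =>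
    simp only [reinforce_eq_init_add, smul_add, sum_add_distrib,
      sum_trajDist_smul_init hP hρ θ fun z => reinforce γ lam r θ z, ih, sum_range_succ, stageMean,
      smul_sum, smul_comm (γ ^ T)]

/-- The derivative of `stageTerm lam r θ z` when `θ` moves with velocity `v`. -/
noncomputable def stageTermDeriv (lam : ℝ) (r : S → A → ℝ) (θ v : S × A → ℝ)
    (z : Fin (n + 1) → S × A) : S × A → ℝ :=
  -(lam * (score θ (z (Fin.last n)).1 (z (Fin.last n)).2 ⬝ᵥ v)) • trajScore θ z -
    regReward lam r θ (z (Fin.last n)) • ∑ l, fisherMulVec θ (z l).1 v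

lemma hasDerivAt_stageTerm {θ : ℝ → S × A → ℝ} {v : S × A → ℝ} {x : ℝ} (hθ : HasDerivAt θ v x)
    (lam : ℝ) (r : S → A → ℝ) (z : Fin (n + 1) → S × A) :
    HasDerivAt (fun t => stageTerm lam r (θ t) z) (stageTermDeriv lam r (θ x) v z) x := by
  refine ((hasDerivAt_regReward hθ lam r _).fun_smul (hasDerivAt_trajScore hθ z)).congr_deriv ?_
  rw [stageTermDeriv, smul_neg, sub_eq_neg_add]

lemma eucNorm_stageTermDeriv_add_le (lam : ℝ) (r : S → A → ℝ) (θ v : S × A → ℝ)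
    (z : Fin (n + 1) → S × A) :
    eucNorm (stageTermDeriv lam r θ v z + (trajScore θ z ⬝ᵥ v) • stageTerm lam r θ z) ≤
      (4 * |regReward lam r θ (z (Fin.last n))| + 2 * |lam|) * (n + 2).choose 2 * eucNorm v := by
  set c := regReward lam r θ (z (Fin.last n))
  set p := score θ (z (Fin.last n)).1 (z (Fin.last n)).2 ⬝ᵥ v
  set G := trajScore θ z
  set H := ∑ l, fisherMulVec θ (z l).1 v
  have hv := eucNorm_nonneg v
  have hp : |p| ≤ √2 * eucNorm v := abs_score_dotProduct_le θ v _ _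
  have hG : eucNorm G ≤ (n + 1) * √2 := by exact_mod_cast eucNorm_trajScore_le θ z
  have hH : eucNorm H ≤ (n + 1) * (2 * eucNorm v) := by
    exact_mod_cast eucNorm_sum_fisherMulVec_le θ v z
  have hGv : |G ⬝ᵥ v| ≤ (n + 1) * √2 * eucNorm v :=
    (abs_dotProduct_le_eucNorm_mul_eucNorm G v).trans (mul_le_mul_of_nonneg_right hG hv)
  calc eucNorm (-(lam * p) • G - c • H + (G ⬝ᵥ v) • c • G)
      ≤ |lam| * (|p| * eucNorm G) + |c| * eucNorm H + |c| * (|G ⬝ᵥ v| * eucNorm G) := by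
        refine (eucNorm_add_le _ _).trans
          ((add_le_add_left (eucNorm_sub_le _ _) _).trans_eq ?_)
        simp only [eucNorm_smul, abs_neg, abs_mul]
        ring
    _ ≤ |lam| * (√2 * eucNorm v * ((n + 1) * √2)) + |c| * ((n + 1) * (2 * eucNorm v)) +
          |c| * ((n + 1) * √2 * eucNorm v * ((n + 1) * √2)) := by
        have hG0 := eucNorm_nonneg G
        gcongr
    _ = (2 * |c| * ((n + 1) * (n + 2)) + 2 * |lam| * ((n + 1) * 1)) * eucNorm v := by
        linear_combination (|lam| * (n + 1) + |c| * (n + 1) ^ 2) * eucNorm v *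
          Real.mul_self_sqrt zero_le_two
    _ ≤ (2 * |c| * ((n + 1) * (n + 2)) + 2 * |lam| * ((n + 1) * ((n + 2) / 2))) * eucNorm v := by
        gcongr
        linarith [(n.cast_nonneg : (0 : ℝ) ≤ n)]
    _ = (4 * |c| + 2 * |lam|) * (n + 2).choose 2 * eucNorm v := by
        rw [Nat.cast_choose_two]
        push_cast
        ring

/-- The derivative of `stageMean P ρ lam r n θ` when `θ` moves with velocity `v`. -/
noncomputable def stageMeanDeriv (P : S → A → S → ℝ) (ρ : S → ℝ) (lam : ℝ) (r : S → A → ℝ) (n : ℕ)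
    (θ v : S × A → ℝ) : S × A → ℝ :=
  ∑ z : Fin (n + 1) → S × A, trajDist P ρ θ z •
    (stageTermDeriv lam r θ v z + (trajScore θ z ⬝ᵥ v) • stageTerm lam r θ z)

lemma hasDerivAt_stageMean {θ : ℝ → S × A → ℝ} {v : S × A → ℝ} {x : ℝ} (hθ : HasDerivAt θ v x)
    (lam : ℝ) (r : S → A → ℝ) (n : ℕ) :
    HasDerivAt (fun t => stageMean P ρ lam r n (θ t)) (stageMeanDeriv P ρ lam r n (θ x) v) x := by
  refine (HasDerivAt.fun_sum fun z _ =>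
    (hasDerivAt_trajDist hθ z).fun_smul (hasDerivAt_stageTerm hθ lam r z)).congr_deriv ?_
  simp only [stageMeanDeriv, smul_add, mul_smul]

section Bounds

variable (hP : ∀ s a, P s a ∈ stdSimplex ℝ S) (hρ : ρ ∈ stdSimplex ℝ S) (lam : ℝ)
  {r : S → A → ℝ} {R : ℝ} (hr : ∀ s a, |r s a| ≤ R) (n : ℕ)
include hP hρ hr

lemma eucNorm_stageMeanDeriv_le (θ v : S × A → ℝ) :
    eucNorm (stageMeanDeriv P ρ lam r n θ v) ≤
      (4 * (R + |lam| * Real.log (Fintype.card A)) + 2 * |lam|) * (n + 2).choose 2 *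
        eucNorm v := by
  have hν := trajDist_mem_stdSimplex hP hρ θ (n := n + 1)
  have hreward : ∑ z : Fin (n + 1) → S × A,
      trajDist P ρ θ z * |regReward lam r θ (z (Fin.last n))| ≤
        R + |lam| * Real.log (Fintype.card A) :=
    sum_trajDist_mul_last_le hP hρ θ (g := fun y => |regReward lam r θ y|)
      (sum_softmax_mul_abs_regReward_le hr θ)
  have hv := eucNorm_nonneg v
  calc eucNorm (stageMeanDeriv P ρ lam r n θ v)
      ≤ ∑ z, trajDist P ρ θ z * ((4 * |regReward lam r θ (z (Fin.last n))| + 2 * |lam|) *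
          (n + 2).choose 2 * eucNorm v) := by
        refine (eucNorm_sum_le _ _).trans (sum_le_sum fun z _ => ?_)
        rw [eucNorm_smul, abs_of_nonneg (hν.1 z)]
        exact mul_le_mul_of_nonneg_left (eucNorm_stageTermDeriv_add_le lam r θ v z) (hν.1 z)
    _ = (4 * ∑ z, trajDist P ρ θ z * |regReward lam r θ (z (Fin.last n))| + 2 * |lam|) *
          (n + 2).choose 2 * eucNorm v := by
        simp only [← mul_assoc, ← sum_mul, mul_add, sum_add_distrib, hν.2, one_mul, mul_sum,
          mul_comm _ (4 : ℝ)]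
    _ ≤ _ := by gcongr

lemma eucNorm_stageMean_sub_le (θ θ' : S × A → ℝ) :
    eucNorm (stageMean P ρ lam r n θ - stageMean P ρ lam r n θ') ≤
      (4 * (R + |lam| * Real.log (Fintype.card A)) + 2 * |lam|) * (n + 2).choose 2 *
        eucNorm (θ - θ') := by
  simpa only [AffineMap.lineMap_apply_one, AffineMap.lineMap_apply_zero] using
    eucNorm_sub_le_of_hasDerivAt
      (fun _ => hasDerivAt_stageMean (AffineMap.hasDerivAt_lineMap (a := θ') (b := θ)) lam r n)
      fun _ => eucNorm_stageMeanDeriv_le hP hρ lam hr n _ (θ - θ')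

end Bounds

end Stage

theorem stmt12_general {S A : Type*} [Fintype S] [Fintype A] [Nonempty S] [Nonempty A]
    [DecidableEq S] [DecidableEq A] (T : ℕ)
    {γ : ℝ} (hγ0 : 0 ≤ γ) (hγ1 : γ < 1) (lam : ℝ)
    {P : S → A → S → ℝ} (hP : ∀ s a, P s a ∈ stdSimplex ℝ S)
    {ρ : S → ℝ} (hρ : ρ ∈ stdSimplex ℝ S)
    {r : S → A → ℝ} {R : ℝ} (hr : ∀ s a, |r s a| ≤ R) (θ θ' : S × A → ℝ) :
    eucNorm ((∑ z : Fin T → S × A, trajDist P ρ θ z • reinforce γ lam r θ z) -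
        ∑ z : Fin T → S × A, trajDist P ρ θ' z • reinforce γ lam r θ' z) ≤
      ((4 * R + |lam| * (2 + 4 * Real.log (Fintype.card A))) / (1 - γ) ^ 3) *
        eucNorm (θ - θ') := by
  have hR : 0 ≤ R := (abs_nonneg _).trans (hr (Classical.arbitrary S) (Classical.arbitrary A))
  have hv := eucNorm_nonneg (θ - θ')
  rw [sum_trajDist_smul_reinforce hP hρ, sum_trajDist_smul_reinforce hP hρ, ← sum_sub_distrib]
  calc eucNorm (∑ n ∈ range T, (γ ^ n • stageMean P ρ lam r n θ - γ ^ n • stageMean P ρ lam r n θ'))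
      ≤ ∑ n ∈ range T, γ ^ n * ((4 * (R + |lam| * Real.log (Fintype.card A)) + 2 * |lam|) *
          (n + 2).choose 2 * eucNorm (θ - θ')) := by
        refine (eucNorm_sum_le _ _).trans (sum_le_sum fun n _ => ?_)
        rw [← smul_sub, eucNorm_smul, abs_of_nonneg (pow_nonneg hγ0 n)]
        exact mul_le_mul_of_nonneg_left (eucNorm_stageMean_sub_le hP hρ lam hr n θ θ')
          (pow_nonneg hγ0 n)
    _ = (∑ n ∈ range T, (n + 2).choose 2 * γ ^ n) *
          ((4 * R + |lam| * (2 + 4 * Real.log (Fintype.card A))) * eucNorm (θ - θ')) := by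
        rw [sum_mul]
        exact sum_congr rfl fun n _ => by ring
    _ ≤ 1 / (1 - γ) ^ 3 *
          ((4 * R + |lam| * (2 + 4 * Real.log (Fintype.card A))) * eucNorm (θ - θ')) := by
        gcongr
        exact sum_range_choose_mul_pow_le hγ0 hγ1 2 T
    _ = _ := by ring

/-- The expectation of the entropy-regularized single-trajectory
REINFORCE vector under the truncated-trajectory distribution is Lipschitz continuous in `θ`
(with respect to the Euclidean norm). -/
theorem stmt12 {S A : Type*} [Fintype S] [Fintype A] [Nonempty S] [Nonempty A]
    [DecidableEq S] [DecidableEq A]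
    (T : ℕ) (hT : 1 ≤ T)
    (γ : ℝ) (hγ0 : 0 ≤ γ) (hγ1 : γ < 1) (lam : ℝ) (hlam : 0 ≤ lam)
    (P : S → A → S → ℝ) (hP : ∀ s a, (∀ s', 0 ≤ P s a s') ∧ ∑ s', P s a s' = 1)
    (ρ : S → ℝ) (hρ0 : ∀ s, 0 ≤ ρ s) (hρ1 : ∑ s, ρ s = 1)
    (r : S → A → ℝ) (hr : ∀ s a, 0 ≤ r s a ∧ r s a ≤ 1)
    (θ θ' : S × A → ℝ) :
    eucNorm ((∑ z : Fin T → S × A, trajDist P ρ θ z • reinforce γ lam r θ z) -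
        ∑ z : Fin T → S × A, trajDist P ρ θ' z • reinforce γ lam r θ' z) ≤
      ((8 + lam * (4 + 8 * Real.log (Fintype.card A))) / (1 - γ) ^ 3) *
        eucNorm (θ - θ') := by
  refine (stmt12_general T hγ0 hγ1 lam hP ⟨hρ0, hρ1⟩ (R := 1)
    (fun s a => (abs_of_nonneg (hr s a).1).trans_le (hr s a).2) θ θ').trans ?_
  rw [abs_of_nonneg hlam]
  gcongr
  · exact eucNorm_nonneg _
  all_goals norm_num
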